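/- Let Γ̃ be a grading of K[x,y] by an abelian group G in which x and y are G-homogeneous. Then every Γ̃-graded automorphism of K[x,y] is graded-tame, i.e., it is a composition of Γ̃-graded elementary and Γ̃-graded linear automorphisms. -/

import Mathlib

open MvPolynomial

/-- An automorphism of `K[x,y]` is *elementary* if it sends one variable `v` to `v + F`
for a polynomial `F` in the other variable and fixes the other variable. -/
def IsElementary {K : Type*} [CommRing K]
    (φ : MvPolynomial (Fin 2) K ≃ₐ[K] MvPolynomial (Fin 2) K) : Prop :=
  ∃ (i : Fin 2) (F : MvPolynomial (Fin 2) K), i ∉ F.vars ∧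
    φ (X i) = X i + F ∧ ∀ j : Fin 2, j ≠ i → φ (X j) = X j

/-- An automorphism of `K[x,y]` is *linear* if it sends each variable to a `K`-linear
combination of the variables. -/
def IsLinearAut {K : Type*} [CommRing K]
    (φ : MvPolynomial (Fin 2) K ≃ₐ[K] MvPolynomial (Fin 2) K) : Prop :=
  ∀ i : Fin 2, ∃ c : Fin 2 → K, φ (X i) = ∑ j : Fin 2, C (c j) * X j

/-- For a grading of `K[x,y]` by an abelian group `G` in which the variables are
homogeneous with degrees `w 0`, `w 1`, an automorphism is *graded* if it maps each
homogeneous component into itself. -/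
def IsGraded {K : Type*} [CommRing K] {G : Type*} [AddCommGroup G] (w : Fin 2 → G)
    (φ : MvPolynomial (Fin 2) K ≃ₐ[K] MvPolynomial (Fin 2) K) : Prop :=
  ∀ (g : G) (f : MvPolynomial (Fin 2) K),
    f.IsWeightedHomogeneous w g → (φ f).IsWeightedHomogeneous w g

/-
Give `X l` the weight `deg (φ (X l))`. If `φ F` has smaller degree than the weighted degree of `F`,
then the leading weighted form of `F` vanishes at the leading forms of the `φ (X l)`. If some
`φ (X i)` has degree at least two, this happens for an `F` with `φ F` a variable, so the two leading
forms satisfy a weighted homogeneous relation.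

The chain rule for Jacobians keeps the degree of `φ (∂ᵗF / ∂xᵢᵗ)` small, so the relation vanishes to
high order at the leading forms and must have many monomials. Their exponents lie on a line which
has few lattice points unless one of the two degrees divides the other. In that case, since
polynomial rings are integrally closed, the leading form of larger degree is a constant multiple of
a power of the other one. Leading forms are homogeneous for the grading, hence the elementary
automorphism which cancels the larger leading form is graded, and the sum of the degrees drops.
-/

namespace PlaneAutomorphism

section LeadingForm

variable {σ τ R : Type*} [CommSemiring R]

lemma degree_le_totalDegree_of_coeff_ne_zero {p : MvPolynomial σ R} {d : σ →₀ ℕ}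
    (h : coeff d p ≠ 0) : d.degree ≤ p.totalDegree :=
  le_totalDegree (mem_support_iff.mpr h)

lemma homogeneousComponent_mul {p q : MvPolynomial σ R} {a b : ℕ} (hp : p.totalDegree ≤ a)
    (hq : q.totalDegree ≤ b) :
    homogeneousComponent (a + b) (p * q) =
      homogeneousComponent a p * homogeneousComponent b q := by
  classical
  ext d
  by_cases hd : d.degree = a + b
  · rw [coeff_homogeneousComponent, if_pos hd, coeff_mul, coeff_mul]
    refine Finset.sum_congr rfl fun ⟨x, y⟩ hxy ↦ ?_
    have hsum : x.degree + y.degree = a + b := by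
      rw [← hd, ← Finset.HasAntidiagonal.mem_antidiagonal.mp hxy, map_add]
    simp only [coeff_homogeneousComponent]
    by_cases hx : x.degree = a
    · rw [if_pos hx, if_pos (by omega)]
    · rw [if_neg hx, zero_mul]
      by_contra hne
      have hxp := degree_le_totalDegree_of_coeff_ne_zero (left_ne_zero_of_mul hne)
      have hyq := degree_le_totalDegree_of_coeff_ne_zero (right_ne_zero_of_mul hne)
      omega
  · rw [coeff_homogeneousComponent, if_neg hd]
    exact (((homogeneousComponent_isHomogeneous a p).mul
      (homogeneousComponent_isHomogeneous b q)).coeff_eq_zero hd).symm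

lemma homogeneousComponent_pow {p : MvPolynomial σ R} {a : ℕ} (hp : p.totalDegree ≤ a) (k : ℕ) :
    homogeneousComponent (k * a) (p ^ k) = homogeneousComponent a p ^ k := by
  induction k with
  | zero => simp
  | succ k ih =>
    have hpk : (p ^ k).totalDegree ≤ k * a := (totalDegree_pow p k).trans (by gcongr)
    rw [pow_succ, Nat.succ_mul, homogeneousComponent_mul hpk hp, ih, pow_succ]

lemma homogeneousComponent_prod {ι : Type*} (s : Finset ι) {f : ι → MvPolynomial σ R} {d : ι → ℕ}
    (hf : ∀ i ∈ s, (f i).totalDegree ≤ d i) :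
    homogeneousComponent (∑ i ∈ s, d i) (∏ i ∈ s, f i) =
      ∏ i ∈ s, homogeneousComponent (d i) (f i) := by
  classical
  induction s using Finset.induction_on with
  | empty => simp
  | insert i s hi ih =>
    have hs : (∏ i ∈ s, f i).totalDegree ≤ ∑ i ∈ s, d i :=
      (totalDegree_finsetProd s f).trans
        (Finset.sum_le_sum fun j hj ↦ hf j (Finset.mem_insert_of_mem hj))
    rw [Finset.sum_insert hi, Finset.prod_insert hi, Finset.prod_insert hi,
      homogeneousComponent_mul (hf i (Finset.mem_insert_self i s)) hs,
      ih fun j hj ↦ hf j (Finset.mem_insert_of_mem hj)]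

lemma homogeneousComponent_aeval {w : σ → ℕ} {f : σ → MvPolynomial τ R}
    (hf : ∀ l, (f l).totalDegree ≤ w l) {P : MvPolynomial σ R} {N : ℕ}
    (hP : weightedTotalDegree w P ≤ N) :
    homogeneousComponent N (aeval f P) =
      aeval (fun l ↦ homogeneousComponent (w l) (f l)) (weightedHomogeneousComponent w N P) := by
  have hpow (s : σ →₀ ℕ) (l : σ) : (f l ^ s l).totalDegree ≤ s l * w l :=
    (totalDegree_pow _ _).trans (by gcongr; exact hf l)
  have hdeg (s : σ →₀ ℕ) : Finsupp.weight w s = ∑ l ∈ s.support, s l * w l := by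
    simp only [Finsupp.weight_apply, Finsupp.sum, smul_eq_mul]
  rw [weightedHomogeneousComponent_apply, map_sum, Finset.sum_filter, aeval_def, eval₂_eq, map_sum]
  refine Finset.sum_congr rfl fun s hs ↦ ?_
  rw [algebraMap_eq, homogeneousComponent_C_mul]
  split_ifs with hsN
  · rw [← hsN, hdeg, homogeneousComponent_prod _ fun l _ ↦ hpow s l, aeval_monomial,
      Finsupp.prod, algebraMap_eq]
    simp only [homogeneousComponent_pow (hf _)]
  · have hlt : Finsupp.weight w s < N := lt_of_le_of_ne ((le_weightedTotalDegree w hs).trans hP) hsN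
    rw [homogeneousComponent_eq_zero, mul_zero]
    calc (∏ l ∈ s.support, f l ^ s l).totalDegree
        ≤ ∑ l ∈ s.support, s l * w l :=
          (totalDegree_finsetProd _ _).trans (Finset.sum_le_sum fun l _ ↦ hpow s l)
      _ < N := hdeg s ▸ hlt

/-- The leading form of a polynomial: its homogeneous component of top degree. -/
noncomputable def leadingForm (p : MvPolynomial σ R) : MvPolynomial σ R :=
  homogeneousComponent p.totalDegree p

lemma isHomogeneous_leadingForm (p : MvPolynomial σ R) :
    (leadingForm p).IsHomogeneous p.totalDegree :=
  homogeneousComponent_isHomogeneous _ _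

lemma isWeightedHomogeneous_leadingForm {M : Type*} [AddCommMonoid M] {w : σ → M}
    {p : MvPolynomial σ R} {g : M} (hp : p.IsWeightedHomogeneous w g) :
    (leadingForm p).IsWeightedHomogeneous w g := by
  intro d hd
  rw [leadingForm, coeff_homogeneousComponent] at hd
  exact hp (ite_ne_right_iff.mp hd).2

lemma weightedHomogeneousComponent_weightedTotalDegree_ne_zero (w : σ → ℕ) {p : MvPolynomial σ R}
    (hp : p ≠ 0) : weightedHomogeneousComponent w (weightedTotalDegree w p) p ≠ 0 := by
  obtain ⟨d, hd, htop⟩ := Finset.exists_mem_eq_sup p.support (support_nonempty.mpr hp)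
    fun s ↦ Finsupp.weight w s
  refine ne_zero_iff.mpr ⟨d, ?_⟩
  rw [coeff_weightedHomogeneousComponent, if_pos (show _ = weightedTotalDegree w p from htop.symm)]
  exact mem_support_iff.mp hd

lemma leadingForm_ne_zero {p : MvPolynomial σ R} (hp : p ≠ 0) : leadingForm p ≠ 0 := by
  rw [leadingForm, ← weightedTotalDegree_one]
  exact weightedHomogeneousComponent_weightedTotalDegree_ne_zero 1 hp

lemma totalDegree_leadingForm (p : MvPolynomial σ R) :
    (leadingForm p).totalDegree = p.totalDegree := by
  rcases eq_or_ne p 0 with rfl | hp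
  · simp [leadingForm]
  · exact (isHomogeneous_leadingForm p).totalDegree (leadingForm_ne_zero hp)

lemma leadingForm_C (c : R) : leadingForm (C c : MvPolynomial σ R) = C c := by
  simp [leadingForm]

lemma leadingForm_mul [NoZeroDivisors R] (p q : MvPolynomial σ R) :
    leadingForm (p * q) = leadingForm p * leadingForm q := by
  rcases eq_or_ne p 0 with rfl | hp
  · simp [leadingForm]
  rcases eq_or_ne q 0 with rfl | hq
  · simp [leadingForm]
  rw [leadingForm, totalDegree_mul_of_isDomain hp hq, homogeneousComponent_mul le_rfl le_rfl]
  rfl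

lemma leadingForm_pow [NoZeroDivisors R] (p : MvPolynomial σ R) (k : ℕ) :
    leadingForm (p ^ k) = leadingForm p ^ k := by
  induction k with
  | zero => simpa using leadingForm_C (σ := σ) (1 : R)
  | succ k ih => rw [pow_succ, leadingForm_mul, ih, pow_succ]

lemma totalDegree_sub_lt_of_leadingForm_eq {S : Type*} [CommRing S] {p q : MvPolynomial σ S}
    (hp : p.totalDegree ≠ 0) (h : leadingForm p = leadingForm q) :
    (p - q).totalDegree < p.totalDegree := by
  have hdeg : q.totalDegree = p.totalDegree := by
    rw [← totalDegree_leadingForm p, h, totalDegree_leadingForm]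
  have hle : (p - q).totalDegree ≤ p.totalDegree := by
    simpa [hdeg] using totalDegree_sub p q
  refine lt_of_le_of_ne hle fun heq ↦ ?_
  have hpq : p - q ≠ 0 := fun h0 ↦ hp (by rw [← heq, h0, totalDegree_zero])
  refine leadingForm_ne_zero hpq ?_
  rw [leadingForm, heq, map_sub, sub_eq_zero]
  simpa only [leadingForm, hdeg] using h

end LeadingForm

section Derivative

variable {σ R : Type*} [CommSemiring R]

lemma weightedHomogeneousComponent_pderiv {M : Type*} [AddCancelCommMonoid M] (w : σ → M) (V : M)
    (i : σ) (F : MvPolynomial σ R) :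
    weightedHomogeneousComponent w V (pderiv i F) =
      pderiv i (weightedHomogeneousComponent w (V + w i) F) := by
  classical
  ext d
  simp only [coeff_weightedHomogeneousComponent, coeff_pderiv, map_add, Finsupp.weight_single,
    one_smul, add_left_inj, ite_mul, zero_mul]

lemma weightedHomogeneousComponent_iterate_pderiv {M : Type*} [AddCancelCommMonoid M] (w : σ → M)
    (V : M) (i : σ) (k : ℕ) (F : MvPolynomial σ R) :
    weightedHomogeneousComponent w V ((pderiv i)^[k] F) =
      (pderiv i)^[k] (weightedHomogeneousComponent w (V + k • w i) F) := by
  induction k generalizing F with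
  | zero => simp
  | succ k ih =>
    rw [Function.iterate_succ_apply, Function.iterate_succ_apply, ih,
      weightedHomogeneousComponent_pderiv, succ_nsmul, add_assoc]

lemma weightedTotalDegree_iterate_pderiv_add_le (w : σ → ℕ) {i : σ} {k : ℕ}
    {F : MvPolynomial σ R} (hF : (pderiv i)^[k] F ≠ 0) :
    weightedTotalDegree w ((pderiv i)^[k] F) + k * w i ≤ weightedTotalDegree w F := by
  have htop := weightedHomogeneousComponent_weightedTotalDegree_ne_zero w hF
  rw [weightedHomogeneousComponent_iterate_pderiv, smul_eq_mul] at htop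
  by_contra! hlt
  exact htop (by rw [weightedHomogeneousComponent_eq_zero _ _ hlt, iterate_map_zero])

lemma totalDegree_pderiv_add_one_le {i : σ} {F : MvPolynomial σ R} (hF : pderiv i F ≠ 0) :
    (pderiv i F).totalDegree + 1 ≤ F.totalDegree := by
  simpa [weightedTotalDegree_one] using weightedTotalDegree_iterate_pderiv_add_le (k := 1) 1 hF

end Derivative

section Jacobian

variable {R : Type*} [CommRing R]

/-- The Jacobian determinant of a pair of polynomials in two variables. -/
noncomputable def jacobian (u v : MvPolynomial (Fin 2) R) : MvPolynomial (Fin 2) R :=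
  pderiv 0 u * pderiv 1 v - pderiv 1 u * pderiv 0 v

lemma jacobian_X_X : jacobian (X 0 : MvPolynomial (Fin 2) R) (X 1) = 1 := by
  simp [jacobian, pderiv_X]

lemma pderiv_map_eq_sum {σ τ : Type*} [Fintype σ]
    (φ : MvPolynomial σ R →ₐ[R] MvPolynomial τ R) (i : τ) (p : MvPolynomial σ R) :
    pderiv i (φ p) = ∑ j, φ (pderiv j p) * pderiv i (φ (X j)) := by
  classical
  induction p using MvPolynomial.induction_on with
  | C a => simp [algHom_C]
  | add p q hp hq => simp only [map_add, hp, hq, add_mul, Finset.sum_add_distrib]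
  | mul_X p l hp =>
    simp only [map_mul, Derivation.leibniz, hp, smul_eq_mul, map_add, pderiv_X, add_mul,
      Finset.sum_add_distrib, Finset.mul_sum, Pi.single_apply]
    congr 1
    · simp
    · exact Finset.sum_congr rfl fun j _ ↦ by ring

lemma jacobian_map (φ : MvPolynomial (Fin 2) R →ₐ[R] MvPolynomial (Fin 2) R)
    (u v : MvPolynomial (Fin 2) R) :
    jacobian (φ u) (φ v) = φ (jacobian u v) * jacobian (φ (X 0)) (φ (X 1)) := by
  simp only [jacobian, pderiv_map_eq_sum φ _ u, pderiv_map_eq_sum φ _ v, Fin.sum_univ_two,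
    map_sub, map_mul]
  ring

lemma jacobian_algEquiv_ne_zero [Nontrivial R]
    (φ : MvPolynomial (Fin 2) R ≃ₐ[R] MvPolynomial (Fin 2) R) :
    jacobian (φ (X 0)) (φ (X 1)) ≠ 0 := by
  intro h
  have hJ := jacobian_map φ.toAlgHom (φ.symm (X 0)) (φ.symm (X 1))
  simp [h, jacobian_X_X] at hJ

lemma totalDegree_jacobian_add_two_le {u v : MvPolynomial (Fin 2) R} (h : jacobian u v ≠ 0) :
    (jacobian u v).totalDegree + 2 ≤ u.totalDegree + v.totalDegree := by
  obtain ⟨d, hd, htop⟩ := Finset.exists_mem_eq_sup _ (support_nonempty.mpr h) Finsupp.degree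
  have hterm {i j : Fin 2} (hij : coeff d (pderiv i u * pderiv j v) ≠ 0) :
      d.degree + 2 ≤ u.totalDegree + v.totalDegree := by
    have hne : pderiv i u * pderiv j v ≠ 0 := ne_zero_iff.mpr ⟨d, hij⟩
    have hu := totalDegree_pderiv_add_one_le (left_ne_zero_of_mul hne)
    have hv := totalDegree_pderiv_add_one_le (right_ne_zero_of_mul hne)
    have huv := totalDegree_mul (pderiv i u) (pderiv j v)
    have hdeg := degree_le_totalDegree_of_coeff_ne_zero hij
    omega
  have hJ : (jacobian u v).totalDegree = d.degree := htop
  rw [hJ]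
  rw [mem_support_iff, jacobian, coeff_sub] at hd
  by_cases h0 : coeff d (pderiv 0 u * pderiv 1 v) = 0
  · exact hterm (i := 1) (j := 0) fun h1 ↦ hd (by rw [h0, h1, sub_zero])
  · exact hterm h0

lemma totalDegree_map_jacobian_add_two_le [IsDomain R]
    (φ : MvPolynomial (Fin 2) R ≃ₐ[R] MvPolynomial (Fin 2) R) {u v : MvPolynomial (Fin 2) R}
    (h : jacobian u v ≠ 0) :
    (φ (jacobian u v)).totalDegree + 2 ≤ (φ u).totalDegree + (φ v).totalDegree := by
  have hφ : φ (jacobian u v) ≠ 0 := (map_ne_zero_iff φ φ.injective).mpr h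
  have hunit := jacobian_algEquiv_ne_zero φ
  have hchain : jacobian (φ u) (φ v) = φ (jacobian u v) * jacobian (φ (X 0)) (φ (X 1)) :=
    jacobian_map φ.toAlgHom u v
  have hle := totalDegree_jacobian_add_two_le (hchain ▸ mul_ne_zero hφ hunit)
  rw [hchain, totalDegree_mul_of_isDomain hφ hunit] at hle
  omega

lemma jacobian_X_eq_or {i j : Fin 2} (hij : i ≠ j) (p : MvPolynomial (Fin 2) R) :
    jacobian (X j) p = pderiv i p ∨ jacobian (X j) p = -pderiv i p := by
  fin_cases i <;> fin_cases j <;> simp [jacobian, pderiv_X] at hij ⊢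

lemma totalDegree_map_pderiv_add_two_le [IsDomain R]
    (φ : MvPolynomial (Fin 2) R ≃ₐ[R] MvPolynomial (Fin 2) R) {i j : Fin 2} (hij : i ≠ j)
    {p : MvPolynomial (Fin 2) R} (hp : pderiv i p ≠ 0) :
    (φ (pderiv i p)).totalDegree + 2 ≤ (φ (X j)).totalDegree + (φ p).totalDegree := by
  rcases jacobian_X_eq_or hij p with hX | hX
  · have hle := totalDegree_map_jacobian_add_two_le φ (u := X j) (v := p) (by rwa [hX])
    rwa [hX] at hle
  · have hle := totalDegree_map_jacobian_add_two_le φ (u := X j) (v := p)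
      (by rwa [hX, neg_ne_zero])
    rwa [hX, map_neg, totalDegree_neg] at hle

lemma totalDegree_map_iterate_pderiv_add_le [IsDomain R]
    (φ : MvPolynomial (Fin 2) R ≃ₐ[R] MvPolynomial (Fin 2) R) {i j : Fin 2} (hij : i ≠ j)
    {p : MvPolynomial (Fin 2) R} {t : ℕ} (hp : (pderiv i)^[t] p ≠ 0) :
    (φ ((pderiv i)^[t] p)).totalDegree + 2 * t ≤
      t * (φ (X j)).totalDegree + (φ p).totalDegree := by
  induction t with
  | zero => simp
  | succ t ih =>
    rw [Function.iterate_succ_apply'] at hp ⊢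
    have hstep := totalDegree_map_pderiv_add_two_le φ hij hp
    have hind := ih fun h ↦ hp (by rw [h, map_zero])
    rw [add_one_mul]
    omega

lemma exists_pderiv_algEquiv_X_ne_zero [Nontrivial R]
    (φ : MvPolynomial (Fin 2) R ≃ₐ[R] MvPolynomial (Fin 2) R) (i : Fin 2) :
    ∃ l, pderiv i (φ (X l)) ≠ 0 := by
  by_contra! h
  refine jacobian_algEquiv_ne_zero φ ?_
  match i with
  | 0 => rw [jacobian, h 0, h 1, zero_mul, mul_zero, sub_zero]
  | 1 => rw [jacobian, h 0, h 1, zero_mul, mul_zero, sub_zero]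

end Jacobian

section RootMultiplicity

variable {A : Type*} [CommRing A]

lemma support_X_mul_derivative_sub_natDegree_smul [IsDomain A] [CharZero A] (P : Polynomial A) :
    (Polynomial.X * Polynomial.derivative P - P.natDegree • P).support =
      P.support.erase P.natDegree := by
  ext n
  have hcoeff : (Polynomial.X * Polynomial.derivative P - P.natDegree • P).coeff n =
      ((n : A) - P.natDegree) * P.coeff n := by
    rw [Polynomial.coeff_sub, Polynomial.coeff_smul, nsmul_eq_mul, sub_mul]
    cases n with
    | zero => simp
    | succ n => simp [Polynomial.coeff_X_mul, Polynomial.coeff_derivative, mul_comm]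
  rw [Polynomial.mem_support_iff, hcoeff, Finset.mem_erase, Polynomial.mem_support_iff,
    mul_ne_zero_iff, sub_ne_zero, Nat.cast_injective.ne_iff]

lemma lt_card_support_of_pow_X_sub_C_dvd [IsDomain A] [CharZero A] {u : A} (hu : u ≠ 0) {t : ℕ}
    {P : Polynomial A} (hP : P ≠ 0) (hdvd : (Polynomial.X - Polynomial.C u) ^ t ∣ P) :
    t < P.support.card := by
  induction t generalizing P with
  | zero => exact Finset.card_pos.mpr (Polynomial.nonempty_support_iff.mpr hP)
  | succ t ih =>
    -- `E` has one term less than `P`, while its order of vanishing at `u` drops by at most one.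
    set E := Polynomial.X * Polynomial.derivative P - P.natDegree • P with hE
    have hcard : E.support.card + 1 = P.support.card := by
      rw [hE, support_X_mul_derivative_sub_natDegree_smul]
      exact Finset.card_erase_add_one (Polynomial.natDegree_mem_support_of_nonzero hP)
    have hEne : E ≠ 0 := by
      intro hE0
      have hmono : P.support.card ≤ 1 := by rw [← hcard, hE0]; simp
      have hroot : Polynomial.eval u P = 0 :=
        Polynomial.dvd_iff_isRoot.mp ((dvd_pow_self _ t.succ_ne_zero).trans hdvd)
      rw [← Polynomial.C_mul_X_pow_eq_self hmono] at hroot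
      simp [hP, hu] at hroot
    have hEdvd : (Polynomial.X - Polynomial.C u) ^ t ∣ E := by
      have hP' := Polynomial.pow_sub_one_dvd_derivative_of_pow_dvd hdvd
      exact dvd_sub (dvd_mul_of_dvd_right hP' _)
        (dvd_smul_of_dvd _ ((pow_dvd_pow _ t.le_succ).trans hdvd))
    have := ih hEne hEdvd
    omega

lemma exists_lt_card_support_eval_iterate_derivative_ne_zero [IsDomain A] [CharZero A] {u : A}
    (hu : u ≠ 0) {P : Polynomial A} (hP : P ≠ 0) :
    ∃ t < P.support.card, Polynomial.eval u (Polynomial.derivative^[t] P) ≠ 0 := by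
  refine ⟨P.rootMultiplicity u, lt_card_support_of_pow_X_sub_C_dvd hu hP
    (P.pow_rootMultiplicity_dvd u), ?_⟩
  rw [Polynomial.eval_iterate_derivative_rootMultiplicity, nsmul_eq_mul]
  exact mul_ne_zero (Nat.cast_ne_zero.mpr (Nat.factorial_ne_zero _))
    (Polynomial.eval_divByMonic_pow_rootMultiplicity_ne_zero u hP)

end RootMultiplicity

section PartialEval

variable {σ R A : Type*} [DecidableEq σ] [CommRing R] [CommRing A] [Algebra R A]

/-- Evaluation of all the variables except `X i` at `a`, which leaves a polynomial in `X i`. -/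
noncomputable def partialEval (a : σ → A) (i : σ) : MvPolynomial σ R →ₐ[R] Polynomial A :=
  aeval (Function.update (Polynomial.C ∘ a) i Polynomial.X)

lemma aeval_partialEval {B : Type*} [CommRing B] [Algebra R B] [Algebra A B] [IsScalarTower R A B]
    (a : σ → A) (i : σ) (b : B) (P : MvPolynomial σ R) :
    Polynomial.aeval b (partialEval a i P) =
      aeval (Function.update (algebraMap A B ∘ a) i b) P := by
  have hcomp : ((Polynomial.aeval b : Polynomial A →ₐ[A] B).restrictScalars R).comp
      (partialEval a i) = aeval (Function.update (algebraMap A B ∘ a) i b) := by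
    refine algHom_ext fun l ↦ ?_
    rcases eq_or_ne l i with rfl | hl <;> simp [partialEval, *]
  exact DFunLike.congr_fun hcomp P

lemma eval_partialEval (a : σ → A) (i : σ) (P : MvPolynomial σ R) :
    Polynomial.eval (a i) (partialEval a i P) = aeval a P := by
  rw [← Polynomial.coe_aeval_eq_eval, aeval_partialEval]
  simp

lemma derivative_partialEval (a : σ → A) (i : σ) (P : MvPolynomial σ R) :
    Polynomial.derivative (partialEval a i P) = partialEval a i (pderiv i P) := by
  induction P using MvPolynomial.induction_on with
  | C c => simp [partialEval, Polynomial.algebraMap_apply]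
  | add p q hp hq => simp only [map_add, hp, hq]
  | mul_X p l hp =>
    have hX : Polynomial.derivative (partialEval a i (X l : MvPolynomial σ R)) =
        partialEval a i (pderiv i (X l : MvPolynomial σ R)) := by
      rcases eq_or_ne l i with rfl | hl
      · simp [partialEval]
      · simp [partialEval, hl, pderiv_X_of_ne hl]
    simp only [map_mul, Polynomial.derivative_mul, pderiv_mul, hp, hX, map_add]

lemma iterate_derivative_partialEval (a : σ → A) (i : σ) (t : ℕ) (P : MvPolynomial σ R) :
    Polynomial.derivative^[t] (partialEval a i P) = partialEval a i ((pderiv i)^[t] P) := by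
  induction t with
  | zero => rfl
  | succ t ih => rw [Function.iterate_succ_apply', Function.iterate_succ_apply', ih,
      derivative_partialEval]

lemma partialEval_monomial (a : σ → A) (i : σ) (s : σ →₀ ℕ) (c : R) :
    partialEval a i (monomial s c) =
      Polynomial.monomial (s i) (algebraMap R A c * (s.erase i).prod fun l n ↦ a l ^ n) := by
  have hprod : ((s.erase i).prod fun l n ↦
      Function.update (Polynomial.C ∘ a) i Polynomial.X l ^ n) =
        Polynomial.C ((s.erase i).prod fun l n ↦ a l ^ n) := by
    rw [Finsupp.prod, Finsupp.prod, map_prod]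
    refine Finset.prod_congr rfl fun l hl ↦ ?_
    rw [Function.update_of_ne (by rintro rfl; simp at hl), Function.comp_apply, map_pow]
  rw [partialEval, aeval_monomial, ← Finsupp.mul_prod_erase' _ i _ fun _ ↦ pow_zero _, hprod,
    Function.update_self, ← Polynomial.C_mul_X_pow_eq_monomial, map_mul,
    Polynomial.algebraMap_apply]
  ring

lemma coeff_partialEval (a : σ → A) (i : σ) (P : MvPolynomial σ R) (n : ℕ) :
    (partialEval a i P).coeff n = ∑ s ∈ P.support with s i = n,
      algebraMap R A (coeff s P) * (s.erase i).prod fun l n ↦ a l ^ n := by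
  conv_lhs => rw [P.as_sum]
  simp only [map_sum, partialEval_monomial, Polynomial.finsetSum_coeff, Polynomial.coeff_monomial,
    Finset.sum_filter]

lemma card_support_partialEval_le (a : σ → A) (i : σ) (P : MvPolynomial σ R) :
    (partialEval a i P).support.card ≤ P.support.card := by
  refine (Finset.card_le_card fun n hn ↦ ?_).trans
    (Finset.card_image_le (s := P.support) (f := fun s ↦ s i))
  rw [Polynomial.mem_support_iff, coeff_partialEval] at hn
  obtain ⟨s, hs, -⟩ := Finset.exists_ne_zero_of_sum_ne_zero hn
  rw [Finset.mem_filter] at hs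
  exact Finset.mem_image.mpr ⟨s, hs⟩

lemma partialEval_ne_zero [IsDomain A] [FaithfulSMul R A] {a : σ → A} {i : σ}
    (ha : ∀ l ≠ i, a l ≠ 0) {P : MvPolynomial σ R}
    (hinj : Set.InjOn (fun s : σ →₀ ℕ ↦ s i) P.support) (hP : P ≠ 0) :
    partialEval a i P ≠ 0 := by
  obtain ⟨s, hs⟩ := support_nonempty.mpr hP
  have hfilter : {s' ∈ P.support | s' i = s i} = {s} :=
    Finset.eq_singleton_iff_unique_mem.mpr ⟨Finset.mem_filter.mpr ⟨hs, rfl⟩, fun s' hs' ↦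
      hinj (Finset.mem_filter.mp hs').1 hs (Finset.mem_filter.mp hs').2⟩
  have hcoeff : (partialEval a i P).coeff (s i) ≠ 0 := by
    rw [coeff_partialEval, hfilter, Finset.sum_singleton]
    refine mul_ne_zero ?_ (Finset.prod_ne_zero_iff.mpr fun l hl ↦ pow_ne_zero _ (ha l ?_))
    · rw [Ne, FaithfulSMul.algebraMap_eq_zero_iff]
      exact mem_support_iff.mp hs
    · rintro rfl
      simp at hl
  exact fun h0 ↦ hcoeff (by rw [h0, Polynomial.coeff_zero])

end PartialEval

lemma exists_lt_card_support_aeval_iterate_pderiv_ne_zero {σ R A : Type*} [CommRing R]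
    [CommRing A] [IsDomain A] [CharZero A] [Algebra R A] [FaithfulSMul R A]
    {a : σ → A} (ha : ∀ l, a l ≠ 0) {i : σ} {P : MvPolynomial σ R}
    (hinj : Set.InjOn (fun s : σ →₀ ℕ ↦ s i) P.support) (hP : P ≠ 0) :
    ∃ t < P.support.card, aeval a ((pderiv i)^[t] P) ≠ 0 := by
  classical
  obtain ⟨t, ht, hne⟩ := exists_lt_card_support_eval_iterate_derivative_ne_zero (ha i)
    (partialEval_ne_zero (fun l _ ↦ ha l) hinj hP)
  refine ⟨t, ht.trans_le (card_support_partialEval_le a i P), ?_⟩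
  rwa [iterate_derivative_partialEval, eval_partialEval] at hne

section WeightedHomogeneous

variable {R : Type*} [CommSemiring R]

lemma aeval_pow_mul_of_isWeightedHomogeneous {σ A : Type*} [CommSemiring A] [Algebra R A]
    {w : σ → ℕ} {P : MvPolynomial σ R} {N : ℕ} (hP : P.IsWeightedHomogeneous w N) (c : A)
    (x : σ → A) : aeval (fun l ↦ c ^ w l * x l) P = c ^ N * aeval x P := by
  rw [aeval_def, aeval_def, eval₂_eq, eval₂_eq, Finset.mul_sum]
  refine Finset.sum_congr rfl fun s hs ↦ ?_
  have hweight : ∏ l ∈ s.support, (c ^ w l) ^ s l = c ^ N := by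
    rw [← hP (mem_support_iff.mp hs), Finsupp.weight_apply, Finsupp.sum,
      ← Finset.prod_pow_eq_pow_sum]
    simp only [← pow_mul, smul_eq_mul, mul_comm]
  simp only [mul_pow, Finset.prod_mul_distrib, hweight, mul_left_comm]

lemma isWeightedHomogeneous_div_of_smul {σ : Type*} {w : σ → ℕ} {P : MvPolynomial σ R} {N n : ℕ}
    (hn : n ≠ 0) (hP : P.IsWeightedHomogeneous (n • w) N) : P.IsWeightedHomogeneous w (N / n) := by
  intro s hs
  have hweight : n * Finsupp.weight w s = N := by
    rw [← hP hs]
    simp only [Finsupp.weight_apply, Finsupp.sum, Pi.smul_apply, smul_eq_mul, Finset.mul_sum,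
      mul_left_comm]
  rw [← hweight, Nat.mul_div_cancel_left _ (Nat.pos_of_ne_zero hn)]

lemma weight_eq_of_ne {M : Type*} [AddCommMonoid M] (w : Fin 2 → M) {i j : Fin 2} (hij : i ≠ j)
    (s : Fin 2 →₀ ℕ) : Finsupp.weight w s = s i • w i + s j • w j := by
  rw [Finsupp.weight_eq_sum, Fin.sum_univ_two]
  fin_cases i <;> fin_cases j <;> simp [add_comm] at hij ⊢

lemma injOn_support_of_isWeightedHomogeneous {w : Fin 2 → ℕ} {P : MvPolynomial (Fin 2) R} {N : ℕ}
    (hP : P.IsWeightedHomogeneous w N) {i j : Fin 2} (hij : i ≠ j) (hj : w j ≠ 0) :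
    Set.InjOn (fun s : Fin 2 →₀ ℕ ↦ s i) P.support := by
  intro s hs s' hs' (heq : s i = s' i)
  have hweight := (hP (mem_support_iff.mp hs)).trans (hP (mem_support_iff.mp hs')).symm
  rw [weight_eq_of_ne w hij, weight_eq_of_ne w hij, heq, add_right_inj, smul_eq_mul, smul_eq_mul,
    Nat.mul_left_inj hj] at hweight
  ext l
  fin_cases i <;> fin_cases j <;> fin_cases l <;> simp_all

lemma modEq_lcm_of_add_mul_eq {a b x y x' y' : ℕ} (h : x * a + y * b = x' * a + y' * b) :
    x * a ≡ x' * a [MOD a.lcm b] := by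
  wlog hle : x * a ≤ x' * a generalizing x y x' y'
  · exact (this h.symm (le_of_not_ge hle)).symm
  rw [Nat.modEq_iff_dvd' hle]
  refine Nat.lcm_dvd (Nat.dvd_sub (dvd_mul_left a x') (dvd_mul_left a x)) ?_
  rw [show x' * a - x * a = y * b - y' * b by omega]
  exact Nat.dvd_sub (dvd_mul_left b y) (dvd_mul_left b y')

lemma card_support_le_of_isWeightedHomogeneous {w : Fin 2 → ℕ} {P : MvPolynomial (Fin 2) R} {N : ℕ}
    (hP : P.IsWeightedHomogeneous w N) (hw : ∀ l, w l ≠ 0) {i j : Fin 2} (hij : i ≠ j) :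
    P.support.card ≤ N / (w i).lcm (w j) + 1 := by
  set m := (w i).lcm (w j)
  have hweight {s : Fin 2 →₀ ℕ} (hs : s ∈ P.support) : s i * w i + s j * w j = N :=
    (weight_eq_of_ne w hij s).symm.trans (hP (mem_support_iff.mp hs))
  rw [← Finset.card_range (N / m + 1)]
  refine Finset.card_le_card_of_injOn (fun s ↦ s i * w i / m) (fun s hs ↦ ?_)
    fun s hs s' hs' h ↦ ?_
  · have hle : s i * w i ≤ N := by
      have := hweight hs
      omega
    exact Finset.mem_coe.mpr (Finset.mem_range_succ_iff.mpr (Nat.div_le_div_right hle))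
  · have hmod : s i * w i % m = s' i * w i % m :=
      modEq_lcm_of_add_mul_eq ((hweight hs).trans (hweight hs').symm)
    have hmul : s i * w i = s' i * w i := by
      rw [← Nat.div_add_mod (s i * w i) m, ← Nat.div_add_mod (s' i * w i) m, hmod]
      exact congrArg (m * · + _) h
    exact injOn_support_of_isWeightedHomogeneous hP hij (hw j) hs hs'
      (Nat.eq_of_mul_eq_mul_right (Nat.pos_of_ne_zero (hw i)) hmul)

end WeightedHomogeneous

section IntegrallyClosed

lemma exists_eq_mul_pow_of_aeval_eq_zero {K A : Type*} [Field K] [CommRing A] [IsDomain A]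
    [IsIntegrallyClosed A] [Algebra K A] {w : Fin 2 → ℕ} {P : MvPolynomial (Fin 2) K} {N : ℕ}
    (hP : P.IsWeightedHomogeneous w N) (hP0 : P ≠ 0) {i j : Fin 2} (hij : i ≠ j) (hj : w j = 1)
    {a : Fin 2 → A} (ha : a j ≠ 0) (hroot : aeval a P = 0) :
    ∃ c : A, a i = c * a j ^ w i := by
  let L := FractionRing A
  let f : A →ₐ[K] L := IsScalarTower.toAlgHom K A L
  have hinj : Function.Injective f := IsFractionRing.injective A L
  have hfj : f (a j) ≠ 0 := (map_ne_zero_iff f hinj).mpr ha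
  let r : L := f (a i) / f (a j) ^ w i
  have hri : f (a i) = f (a j) ^ w i * r := (mul_div_cancel₀ _ (pow_ne_zero _ hfj)).symm
  have hpoint : (fun l ↦ f (a l)) =
      fun l ↦ f (a j) ^ w l * Function.update (1 : Fin 2 → L) i r l := by
    ext l
    rcases eq_or_ne l i with rfl | hl
    · simp [hri]
    · have hlj : l = j := by omega
      simp [hlj, hij.symm, hj]
  have hr0 : Polynomial.aeval r (partialEval (1 : Fin 2 → K) i P) = 0 := by
    have hzero : f (a j) ^ N * aeval (Function.update (1 : Fin 2 → L) i r) P = 0 := by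
      rw [← aeval_pow_mul_of_isWeightedHomogeneous hP, ← hpoint, ← comp_aeval_apply, hroot,
        map_zero]
    have hone : algebraMap K L ∘ (1 : Fin 2 → K) = 1 := funext fun _ ↦ map_one _
    rw [aeval_partialEval, hone]
    exact (mul_eq_zero.mp hzero).resolve_left (pow_ne_zero _ hfj)
  have hne : partialEval (1 : Fin 2 → K) i P ≠ 0 :=
    partialEval_ne_zero (fun _ _ ↦ one_ne_zero)
      (injOn_support_of_isWeightedHomogeneous hP hij (by rw [hj]; exact one_ne_zero)) hP0
  have hint : IsIntegral K r := IsAlgebraic.isIntegral ⟨_, hne, hr0⟩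
  obtain ⟨c, hc⟩ := IsIntegrallyClosed.isIntegral_iff.mp (hint.tower_top (A := A))
  refine ⟨c, hinj ?_⟩
  rw [hri, map_mul, map_pow, mul_comm]
  exact congrArg (· * _) hc.symm

end IntegrallyClosed

section LeadingFormsOfAutomorphisms

section CommSemiring

variable {σ R : Type*} [CommSemiring R]

/-- The weight on the variables given by the degrees of their images under `φ`. The weighted degree
of `F` for this weight is the degree which `φ F` has unless leading terms cancel. -/
noncomputable def imageDegree (φ : MvPolynomial σ R ≃ₐ[R] MvPolynomial σ R) (l : σ) : ℕ :=
  (φ (X l)).totalDegree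

variable (φ : MvPolynomial σ R ≃ₐ[R] MvPolynomial σ R)

lemma homogeneousComponent_algEquiv {F : MvPolynomial σ R} {N : ℕ}
    (hF : weightedTotalDegree (imageDegree φ) F ≤ N) :
    homogeneousComponent N (φ F) =
      aeval (fun l ↦ leadingForm (φ (X l)))
        (weightedHomogeneousComponent (imageDegree φ) N F) := by
  rw [show φ F = aeval (fun l ↦ φ (X l)) F from
    DFunLike.congr_fun (aeval_unique φ.toAlgHom) F]
  exact homogeneousComponent_aeval (fun _ ↦ le_rfl) hF

lemma imageDegree_ne_zero [Nontrivial R] (i : σ) : imageDegree φ i ≠ 0 := by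
  intro h
  have hX : (X i : MvPolynomial σ R) = C (coeff 0 (φ (X i))) := by
    apply φ.injective
    rw [← algebraMap_eq, AlgEquiv.commutes, algebraMap_eq]
    exact totalDegree_eq_zero_iff_eq_C.mp h
  have hdeg := congrArg totalDegree hX
  rw [totalDegree_X, totalDegree_C] at hdeg
  exact one_ne_zero hdeg

lemma leadingForm_algEquiv_X_ne_zero [Nontrivial R] (i : σ) : leadingForm (φ (X i)) ≠ 0 :=
  leadingForm_ne_zero fun h ↦ imageDegree_ne_zero φ i (by rw [imageDegree, h, totalDegree_zero])

end CommSemiring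

lemma iterate_pderiv_ne_zero_and_le_totalDegree {σ R : Type*} [CommSemiring R]
    (φ : MvPolynomial σ R ≃ₐ[R] MvPolynomial σ R) {i : σ} {t : ℕ} {F : MvPolynomial σ R}
    (hne : aeval (fun l ↦ leadingForm (φ (X l))) ((pderiv i)^[t]
      (weightedHomogeneousComponent (imageDegree φ)
        (weightedTotalDegree (imageDegree φ) F) F)) ≠ 0) :
    (pderiv i)^[t] F ≠ 0 ∧ weightedTotalDegree (imageDegree φ) F ≤
      (φ ((pderiv i)^[t] F)).totalDegree + t * imageDegree φ i := by
  set w := imageDegree φ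
  set W := weightedTotalDegree w F
  set H := weightedHomogeneousComponent w W F
  have hHW : weightedTotalDegree w H ≤ W :=
    Finset.sup_le fun s hs ↦ (weightedHomogeneousComponent_isWeightedHomogeneous W F
      (mem_support_iff.mp hs)).le
  have hdH : (pderiv i)^[t] H ≠ 0 := fun h ↦ hne (by rw [h, map_zero])
  have htW := weightedTotalDegree_iterate_pderiv_add_le w hdH
  have hcomp : weightedHomogeneousComponent w (W - t * w i) ((pderiv i)^[t] F) =
      (pderiv i)^[t] H := by
    rw [weightedHomogeneousComponent_iterate_pderiv, smul_eq_mul, Nat.sub_add_cancel (by omega)]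
  have hdF : (pderiv i)^[t] F ≠ 0 := fun h ↦ hdH (by rw [← hcomp, h, map_zero])
  refine ⟨hdF, ?_⟩
  have hWdF := weightedTotalDegree_iterate_pderiv_add_le w hdF
  by_contra! hlt
  have hle : weightedTotalDegree w ((pderiv i)^[t] F) ≤ W - t * w i := by omega
  refine hne ?_
  rw [← hcomp, ← homogeneousComponent_algEquiv φ hle, homogeneousComponent_eq_zero _ _ (by omega)]

lemma exists_weightedTotalDegree_add_le {R : Type*} [CommRing R] [IsDomain R] [CharZero R]
    (φ : MvPolynomial (Fin 2) R ≃ₐ[R] MvPolynomial (Fin 2) R) {i j : Fin 2} (hij : i ≠ j)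
    {F : MvPolynomial (Fin 2) R} (hF : F ≠ 0) :
    ∃ t, t * (imageDegree φ i).lcm (imageDegree φ j) ≤ weightedTotalDegree (imageDegree φ) F ∧
      weightedTotalDegree (imageDegree φ) F + 2 * t ≤
        t * (imageDegree φ i + imageDegree φ j) + (φ F).totalDegree := by
  set w := imageDegree φ
  set W := weightedTotalDegree w F
  have hH0 := weightedHomogeneousComponent_weightedTotalDegree_ne_zero w hF
  have hHw : (weightedHomogeneousComponent w W F).IsWeightedHomogeneous w W :=
    weightedHomogeneousComponent_isWeightedHomogeneous _ _
  obtain ⟨t, ht, hne⟩ := exists_lt_card_support_aeval_iterate_pderiv_ne_zero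
    (leadingForm_algEquiv_X_ne_zero φ)
    (injOn_support_of_isWeightedHomogeneous hHw hij (imageDegree_ne_zero φ j)) hH0
  refine ⟨t, ?_, ?_⟩
  · have hcard := card_support_le_of_isWeightedHomogeneous hHw (imageDegree_ne_zero φ) hij
    exact (Nat.mul_le_mul_right _ (Nat.lt_add_one_iff.mp (ht.trans_le hcard))).trans
      (Nat.div_mul_le_self W _)
  · obtain ⟨hdF, hlow⟩ := iterate_pderiv_ne_zero_and_le_totalDegree φ hne
    have hup : (φ ((pderiv i)^[t] F)).totalDegree + 2 * t ≤ t * w j + (φ F).totalDegree :=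
      totalDegree_map_iterate_pderiv_add_le φ hij hdF
    change W ≤ (φ ((pderiv i)^[t] F)).totalDegree + t * w i at hlow
    rw [mul_add]
    omega

lemma dvd_of_lcm_lt_add {a b : ℕ} (hb : b ≠ 0) (hba : b ≤ a) (h : a.lcm b < a + b) : b ∣ a := by
  obtain ⟨q, hq⟩ := Nat.dvd_lcm_left a b
  have hpos : 0 < a.lcm b := Nat.lcm_pos (by omega) (Nat.pos_of_ne_zero hb)
  have hq1 : q = 1 := by
    have hq2 : a * q < a * 2 := by omega
    have := Nat.lt_of_mul_lt_mul_left hq2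
    have : q ≠ 0 := by
      rintro rfl
      omega
    omega
  rw [hq1, mul_one] at hq
  exact hq ▸ Nat.dvd_lcm_right a b

lemma imageDegree_dvd {R : Type*} [CommRing R] [IsDomain R] [CharZero R]
    (φ : MvPolynomial (Fin 2) R ≃ₐ[R] MvPolynomial (Fin 2) R) {i j : Fin 2} (hij : i ≠ j)
    (hle : imageDegree φ j ≤ imageDegree φ i) {F : MvPolynomial (Fin 2) R}
    (hlt : (φ F).totalDegree < weightedTotalDegree (imageDegree φ) F)
    (hone : (φ F).totalDegree ≤ 1) : imageDegree φ j ∣ imageDegree φ i := by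
  have hF : F ≠ 0 := by
    rintro rfl
    rw [weightedTotalDegree_zero] at hlt
    exact Nat.not_lt_zero _ hlt
  obtain ⟨t, hlcm, hsum⟩ := exists_weightedTotalDegree_add_le φ hij hF
  refine dvd_of_lcm_lt_add (imageDegree_ne_zero φ j) hle ?_
  by_contra! h
  have ht : t ≠ 0 := by
    rintro rfl
    omega
  have := Nat.mul_le_mul_left t h
  omega

section Field

variable {K : Type*} [Field K] (φ : MvPolynomial (Fin 2) K ≃ₐ[K] MvPolynomial (Fin 2) K)

lemma leadingForm_eq_C_mul_pow_of_aeval_eq_zero {i j : Fin 2} (hij : i ≠ j)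
    (hdvd : imageDegree φ j ∣ imageDegree φ i) {P : MvPolynomial (Fin 2) K} {N : ℕ}
    (hP : P.IsWeightedHomogeneous (imageDegree φ) N) (hP0 : P ≠ 0)
    (hroot : aeval (fun l ↦ leadingForm (φ (X l))) P = 0) :
    ∃ (k : ℕ) (c : K), leadingForm (φ (X i)) = C c * leadingForm (φ (X j)) ^ k := by
  set a : Fin 2 → MvPolynomial (Fin 2) K := fun l ↦ leadingForm (φ (X l))
  have haj : a j ≠ 0 := leadingForm_algEquiv_X_ne_zero φ j
  have hai : a i ≠ 0 := leadingForm_algEquiv_X_ne_zero φ i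
  have hweight : imageDegree φ = imageDegree φ j • fun l ↦ imageDegree φ l / imageDegree φ j := by
    ext l
    have hl : imageDegree φ j ∣ imageDegree φ l := by
      rcases eq_or_ne l i with rfl | hl
      · exact hdvd
      · rw [show l = j by omega]
    exact (Nat.mul_div_cancel' hl).symm
  have hj := imageDegree_ne_zero φ j
  obtain ⟨c, hc⟩ := exists_eq_mul_pow_of_aeval_eq_zero
    (isWeightedHomogeneous_div_of_smul hj (hweight ▸ hP)) hP0 hij
    (Nat.div_self (Nat.pos_of_ne_zero hj)) haj hroot
  set k := imageDegree φ i / imageDegree φ j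
  have hpow0 : a j ^ k ≠ 0 := pow_ne_zero _ haj
  have hpow : (a j ^ k).totalDegree = imageDegree φ i := by
    rw [(((isHomogeneous_leadingForm _).pow k).totalDegree hpow0)]
    exact Nat.mul_div_cancel' hdvd
  have hc0 : c ≠ 0 := by
    rintro rfl
    exact hai (hc.trans (zero_mul _))
  have hdeg : (a i).totalDegree = c.totalDegree + imageDegree φ i :=
    hpow ▸ hc ▸ totalDegree_mul_of_isDomain hc0 hpow0
  have hconst : c.totalDegree = 0 := by
    rwa [totalDegree_leadingForm, ← imageDegree, right_eq_add] at hdeg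
  refine ⟨k, coeff 0 c, ?_⟩
  rw [← totalDegree_eq_zero_iff_eq_C.mp hconst]
  exact hc

theorem exists_leadingForm_eq_C_mul_pow [CharZero K] {i j : Fin 2} (hij : i ≠ j)
    (hle : imageDegree φ j ≤ imageDegree φ i) (htwo : 2 ≤ imageDegree φ i) :
    ∃ (k : ℕ) (c : K), leadingForm (φ (X i)) = C c * leadingForm (φ (X j)) ^ k := by
  obtain ⟨l, hl⟩ := exists_pderiv_algEquiv_X_ne_zero φ.symm i
  set F := φ.symm (X l) with hF
  have hF0 : F ≠ 0 := fun h ↦ hl (by rw [h, map_zero])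
  have hφF : (φ F).totalDegree = 1 := by rw [hF, φ.apply_symm_apply, totalDegree_X]
  have hlt : (φ F).totalDegree < weightedTotalDegree (imageDegree φ) F := by
    have := weightedTotalDegree_iterate_pderiv_add_le (k := 1) (imageDegree φ) hl
    omega
  refine leadingForm_eq_C_mul_pow_of_aeval_eq_zero φ hij (imageDegree_dvd φ hij hle hlt hφF.le)
    (weightedHomogeneousComponent_isWeightedHomogeneous (weightedTotalDegree (imageDegree φ) F) F)
    (weightedHomogeneousComponent_weightedTotalDegree_ne_zero _ hF0) ?_
  rw [← homogeneousComponent_algEquiv φ le_rfl, homogeneousComponent_eq_zero _ _ hlt]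

end Field

end LeadingFormsOfAutomorphisms

section ElementaryAutomorphisms

variable {σ R : Type*} [DecidableEq σ] [CommRing R]

lemma aeval_update_X_of_notMem_vars {i : σ} {F : MvPolynomial σ R} (hF : i ∉ F.vars)
    (p : MvPolynomial σ R) : aeval (Function.update X i p) F = F := by
  have h : aeval (Function.update X i p) F = aeval X F :=
    eval₂Hom_congr' rfl (fun l hl _ ↦ Function.update_of_ne (ne_of_mem_of_not_mem hl hF) _ _) rfl
  rw [h, aeval_X_left_apply]

lemma aeval_update_X_add_comp_aeval_update_X_add {i : σ} {F G : MvPolynomial σ R}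
    (hG : i ∉ G.vars) (hFG : F + G = 0) :
    (aeval (Function.update X i (X i + F))).comp (aeval (Function.update X i (X i + G))) =
      AlgHom.id R (MvPolynomial σ R) := by
  refine algHom_ext fun l ↦ ?_
  rw [AlgHom.comp_apply, aeval_X, AlgHom.id_apply]
  rcases eq_or_ne l i with rfl | hl
  · rw [Function.update_self, map_add, aeval_X, Function.update_self,
      aeval_update_X_of_notMem_vars hG, add_assoc, hFG, add_zero]
  · rw [Function.update_of_ne hl, aeval_X, Function.update_of_ne hl]

/-- The translation of the variable `X i` by a polynomial `F` which does not involve it. -/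
noncomputable def elementaryAut (i : σ) (F : MvPolynomial σ R) (hF : i ∉ F.vars) :
    MvPolynomial σ R ≃ₐ[R] MvPolynomial σ R :=
  AlgEquiv.ofAlgHom (aeval (Function.update X i (X i + F)))
    (aeval (Function.update X i (X i + -F)))
    (aeval_update_X_add_comp_aeval_update_X_add (by rwa [vars_neg]) (add_neg_cancel F))
    (aeval_update_X_add_comp_aeval_update_X_add hF (neg_add_cancel F))

variable {i : σ} {F : MvPolynomial σ R} (hF : i ∉ F.vars)

lemma elementaryAut_X_self : elementaryAut i F hF (X i) = X i + F := by
  simp [elementaryAut]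

lemma elementaryAut_X_of_ne {l : σ} (hl : l ≠ i) : elementaryAut i F hF (X l) = X l := by
  simp [elementaryAut, hl]

lemma elementaryAut_symm :
    (elementaryAut i F hF).symm = elementaryAut i (-F) (by rwa [vars_neg]) := by
  ext l
  rfl

end ElementaryAutomorphisms

section GradedAutomorphisms

lemma isWeightedHomogeneous_aeval {σ τ R M : Type*} [CommSemiring R] [AddCommMonoid M]
    {v : σ → M} {w : τ → M} {f : σ → MvPolynomial τ R}
    (hf : ∀ l, (f l).IsWeightedHomogeneous w (v l)) {P : MvPolynomial σ R} {g : M}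
    (hP : P.IsWeightedHomogeneous v g) : (aeval f P).IsWeightedHomogeneous w g := by
  rw [aeval_def, eval₂_eq]
  refine IsWeightedHomogeneous.sum _ _ _ fun s hs ↦ ?_
  have hprod := IsWeightedHomogeneous.prod s.support (fun l ↦ f l ^ s l) (fun l ↦ s l • v l)
    fun l _ ↦ (hf l).pow (s l)
  rw [← hP (mem_support_iff.mp hs), Finsupp.weight_apply, Finsupp.sum,
    ← zero_add (∑ l ∈ s.support, s l • v l)]
  exact (isWeightedHomogeneous_C w _).mul hprod

variable {K G : Type*} [CommRing K] [AddCommGroup G] {w : Fin 2 → G}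
  {φ ψ : MvPolynomial (Fin 2) K ≃ₐ[K] MvPolynomial (Fin 2) K}

lemma isGraded_iff : IsGraded w φ ↔ ∀ i, (φ (X i)).IsWeightedHomogeneous w (w i) := by
  refine ⟨fun h i ↦ h _ _ (isWeightedHomogeneous_X K w i), fun h g f hf ↦ ?_⟩
  rw [show φ f = aeval (fun l ↦ φ (X l)) f from
    DFunLike.congr_fun (aeval_unique φ.toAlgHom) f]
  exact isWeightedHomogeneous_aeval h hf

lemma isGraded_mul (hφ : IsGraded w φ) (hψ : IsGraded w ψ) : IsGraded w (φ * ψ) :=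
  fun g f hf ↦ hφ g _ (hψ g f hf)

variable {i : Fin 2} {F : MvPolynomial (Fin 2) K}

lemma isElementary_elementaryAut (hF : i ∉ F.vars) : IsElementary (elementaryAut i F hF) :=
  ⟨i, F, hF, elementaryAut_X_self hF, fun _ ↦ elementaryAut_X_of_ne hF⟩

lemma isGraded_elementaryAut (hF : i ∉ F.vars) (hw : F.IsWeightedHomogeneous w (w i)) :
    IsGraded w (elementaryAut i F hF) := by
  refine isGraded_iff.mpr fun l ↦ ?_
  rcases eq_or_ne l i with rfl | hl
  · rw [elementaryAut_X_self]
    exact (isWeightedHomogeneous_X K w l).add hw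
  · rw [elementaryAut_X_of_ne hF hl]
    exact isWeightedHomogeneous_X K w l

/-- The graded-tame automorphisms: the compositions of graded elementary and graded linear
automorphisms. These form a group, but only products are needed, so a submonoid suffices. -/
noncomputable def gradedTame (K : Type*) [CommRing K] (w : Fin 2 → G) :
    Submonoid (MvPolynomial (Fin 2) K ≃ₐ[K] MvPolynomial (Fin 2) K) :=
  Submonoid.closure {ψ | IsGraded w ψ ∧ (IsElementary ψ ∨ IsLinearAut ψ)}

lemma mem_gradedTame_of_mul_elementaryAut_mem (hF : i ∉ F.vars)
    (hw : F.IsWeightedHomogeneous w (w i)) (h : φ * elementaryAut i F hF ∈ gradedTame K w) :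
    φ ∈ gradedTame K w := by
  have hF' : i ∉ (-F).vars := by rwa [vars_neg]
  have hinv : elementaryAut i (-F) hF' ∈ gradedTame K w :=
    Submonoid.subset_closure
      ⟨isGraded_elementaryAut hF' hw.neg, Or.inl (isElementary_elementaryAut hF')⟩
  have hφ : φ = φ * elementaryAut i F hF * elementaryAut i (-F) hF' := by
    rw [← elementaryAut_symm hF]
    exact (mul_inv_cancel_right φ (elementaryAut i F hF)).symm
  exact hφ ▸ mul_mem h hinv

end GradedAutomorphisms

section DegreeReduction

lemma exists_sub_C_coeff_zero_eq_sum {σ R : Type*} [Fintype σ] [CommRing R]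
    {p : MvPolynomial σ R} (hp : p.totalDegree ≤ 1) :
    ∃ c : σ → R, p - C (coeff 0 p) = ∑ j, C (c j) * X j := by
  have hsplit : p = C (coeff 0 p) + homogeneousComponent 1 p := by
    have hsub : Finset.range (p.totalDegree + 1) ⊆ Finset.range 2 :=
      Finset.range_subset_range.mpr (by omega)
    have hzero : ∀ k ∈ Finset.range 2, k ∉ Finset.range (p.totalDegree + 1) →
        homogeneousComponent k p = 0 := fun k _ hk ↦
      homogeneousComponent_eq_zero k p (by simpa using hk)
    conv_lhs => rw [← sum_homogeneousComponent p, Finset.sum_subset hsub hzero,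
      Finset.sum_range_succ, Finset.sum_range_one, homogeneousComponent_zero]
  have hspan := homogeneousComponent_mem 1 p
  rw [homogeneousSubmodule_one_eq_span_X, Submodule.mem_span_range_iff_exists_fun] at hspan
  obtain ⟨c, hc⟩ := hspan
  refine ⟨c, ?_⟩
  rw [sub_eq_iff_eq_add', ← Finset.sum_congr rfl fun j _ ↦ smul_eq_C_mul (X j) (c j), hc]
  exact hsplit

lemma isWeightedHomogeneous_C_coeff_zero {σ R M : Type*} [CommSemiring R] [AddCommMonoid M]
    {w : σ → M} {p : MvPolynomial σ R} {g : M} (hp : p.IsWeightedHomogeneous w g) :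
    (C (coeff 0 p) : MvPolynomial σ R).IsWeightedHomogeneous w g := by
  classical
  intro d hd
  rw [coeff_C] at hd
  obtain ⟨rfl, h⟩ := ite_ne_right_iff.mp hd
  exact hp h

variable {K G : Type*} [AddCommGroup G] {w : Fin 2 → G}

lemma mem_gradedTame_of_imageDegree_le_one [CommRing K]
    {φ : MvPolynomial (Fin 2) K ≃ₐ[K] MvPolynomial (Fin 2) K} (hφ : IsGraded w φ)
    (h : ∀ i, imageDegree φ i ≤ 1) : φ ∈ gradedTame K w := by
  have hX := isGraded_iff.mp hφ
  have hvars (i : Fin 2) : i ∉ (-C (coeff 0 (φ (X i))) : MvPolynomial (Fin 2) K).vars := by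
    rw [vars_neg, vars_C]
    exact Finset.notMem_empty i
  have hconst (i : Fin 2) :
      (-C (coeff 0 (φ (X i))) : MvPolynomial (Fin 2) K).IsWeightedHomogeneous w (w i) :=
    (isWeightedHomogeneous_C_coeff_zero (hX i)).neg
  let τ (i : Fin 2) := elementaryAut i (-C (coeff 0 (φ (X i)))) (hvars i)
  have hτ (i : Fin 2) : IsGraded w (τ i) := isGraded_elementaryAut (hvars i) (hconst i)
  apply mem_gradedTame_of_mul_elementaryAut_mem (hvars 0) (hconst 0)
  apply mem_gradedTame_of_mul_elementaryAut_mem (hvars 1) (hconst 1)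
  refine Submonoid.subset_closure ⟨isGraded_mul (isGraded_mul hφ (hτ 0)) (hτ 1), Or.inr ?_⟩
  intro i
  obtain ⟨c, hc⟩ := exists_sub_C_coeff_zero_eq_sum (h i)
  refine ⟨c, hc ▸ ?_⟩
  have hC (ψ : MvPolynomial (Fin 2) K ≃ₐ[K] MvPolynomial (Fin 2) K) (a : K) : ψ (C a) = C a :=
    ψ.commutes a
  fin_cases i <;>
    simp [AlgEquiv.mul_apply, elementaryAut_X_self, elementaryAut_X_of_ne, hC, sub_eq_add_neg]

lemma exists_mul_elementaryAut_imageDegree_lt [Field K] [CharZero K]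
    {φ : MvPolynomial (Fin 2) K ≃ₐ[K] MvPolynomial (Fin 2) K} (hφ : IsGraded w φ) {i j : Fin 2}
    (hij : i ≠ j) (hle : imageDegree φ j ≤ imageDegree φ i) (htwo : 2 ≤ imageDegree φ i) :
    ∃ (F : MvPolynomial (Fin 2) K) (hF : i ∉ F.vars), F.IsWeightedHomogeneous w (w i) ∧
      imageDegree (φ * elementaryAut i F hF) i < imageDegree φ i := by
  have hX := isGraded_iff.mp hφ
  obtain ⟨k, c, hlead⟩ := exists_leadingForm_eq_C_mul_pow φ hij hle htwo
  have hweight : k • w j = w i := by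
    have hpow := ((isWeightedHomogeneous_leadingForm (hX j)).pow k).C_mul c
    rw [← hlead] at hpow
    exact hpow.inj_right (leadingForm_algEquiv_X_ne_zero φ i)
      (isWeightedHomogeneous_leadingForm (hX i))
  have hvars : i ∉ (-(C c * X j ^ k) : MvPolynomial (Fin 2) K).vars := by
    rw [vars_neg]
    refine fun h ↦ hij ?_
    have hj : i ∈ (X j : MvPolynomial (Fin 2) K).vars :=
      vars_pow _ k (by simpa using vars_mul _ _ h)
    rwa [vars_X, Finset.mem_singleton] at hj
  refine ⟨_, hvars, hweight ▸ (((isWeightedHomogeneous_X K w j).pow k).C_mul c).neg, ?_⟩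
  have himage : (φ * elementaryAut i _ hvars) (X i) = φ (X i) - C c * φ (X j) ^ k := by
    rw [AlgEquiv.mul_apply, elementaryAut_X_self, map_add, map_neg, map_mul, map_pow,
      show φ (C c) = C c from φ.commutes c, sub_eq_add_neg]
  rw [imageDegree, himage]
  refine totalDegree_sub_lt_of_leadingForm_eq (imageDegree_ne_zero φ i) ?_
  rw [leadingForm_mul, leadingForm_C, leadingForm_pow, hlead]

theorem mem_gradedTame_of_isGraded [Field K] [CharZero K]
    (φ : MvPolynomial (Fin 2) K ≃ₐ[K] MvPolynomial (Fin 2) K) (hφ : IsGraded w φ) :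
    φ ∈ gradedTame K w := by
  induction hN : ∑ l, imageDegree φ l using Nat.strong_induction_on generalizing φ with
  | _ N ih =>
  subst hN
  obtain ⟨i, hmax⟩ := Finite.exists_max (imageDegree φ)
  rcases Nat.lt_or_ge 1 (imageDegree φ i) with htwo | hone
  swap
  · exact mem_gradedTame_of_imageDegree_le_one hφ fun l ↦ (hmax l).trans hone
  obtain ⟨j, hji⟩ := exists_ne i
  obtain ⟨F, hF, hw, hlt⟩ :=
    exists_mul_elementaryAut_imageDegree_lt hφ hji.symm (hmax j) htwo
  refine mem_gradedTame_of_mul_elementaryAut_mem hF hw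
    (ih _ ?_ _ (isGraded_mul hφ (isGraded_elementaryAut hF hw)) rfl)
  refine Finset.sum_lt_sum (fun l _ ↦ ?_) ⟨i, Finset.mem_univ i, hlt⟩
  rcases eq_or_ne l i with rfl | hl
  · exact hlt.le
  · rw [imageDegree, AlgEquiv.mul_apply, elementaryAut_X_of_ne hF hl, imageDegree]

end DegreeReduction

end PlaneAutomorphism

theorem graded_automorphism_of_plane_is_graded_tame_general
    {K : Type*} [Field K] [CharZero K] {G : Type*} [AddCommGroup G] (w : Fin 2 → G)
    (φ : MvPolynomial (Fin 2) K ≃ₐ[K] MvPolynomial (Fin 2) K) (hφ : IsGraded w φ) :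
    ∃ l : List (MvPolynomial (Fin 2) K ≃ₐ[K] MvPolynomial (Fin 2) K),
      (∀ ψ ∈ l, IsGraded w ψ ∧ (IsElementary ψ ∨ IsLinearAut ψ)) ∧ φ = l.prod := by
  obtain ⟨l, hl, hprod⟩ := Submonoid.exists_list_of_mem_closure
    (PlaneAutomorphism.mem_gradedTame_of_isGraded φ hφ)
  exact ⟨l, hl, hprod.symm⟩

/-- Every graded automorphism of the polynomial ring in two variables, with respect to any
grading by an abelian group in which the variables are homogeneous, is graded-tame: it is a
composition of graded elementary and graded linear automorphisms. -/
theorem graded_automorphism_of_plane_is_graded_tame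
    {K : Type*} [Field K] [IsAlgClosed K] [CharZero K]
    {G : Type*} [AddCommGroup G] (w : Fin 2 → G)
    (φ : MvPolynomial (Fin 2) K ≃ₐ[K] MvPolynomial (Fin 2) K)
    (hφ : IsGraded w φ) :
    ∃ l : List (MvPolynomial (Fin 2) K ≃ₐ[K] MvPolynomial (Fin 2) K),
      (∀ ψ ∈ l, IsGraded w ψ ∧ (IsElementary ψ ∨ IsLinearAut ψ)) ∧ φ = l.prod :=
  graded_automorphism_of_plane_is_graded_tame_general w φ hφ
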